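/- The tensor product of two exact squares is exact: let (p0: P → A, p1: P → B, f: A → C, g: B → C) and (p0': P' → A', p1': P' → B', f': A' → C', g': B' → C') be exact lax squares of V-categories over a commutative quantale V. Then for all objects a of A, a' of A', b of B, b' of B': C(f a, g b) ⊗ C'(f' a', g' b') = ⋁_{(w,w')} (A(a, p0 w) ⊗ A'(a', p0' w')) ⊗ (B(p1 w, b) ⊗ B'(p1' w', b')), where (w,w') ranges over pairs of objects of P and P'; that is, the square of tensor-product V-categories and componentwise V-functors is again exact. -/

import Mathlib

universe u v w

/-- A category enriched in a commutative quantale `V`: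
objects together with `V`-valued homs satisfying the identity and composition axioms. -/
structure VCategory (V : Type u) [CompleteLattice V] [CommMonoid V] where
  Obj : Type v
  hom : Obj → Obj → V
  one_le_hom : ∀ a, (1 : V) ≤ hom a a
  comp_le : ∀ a b c, hom b c * hom a b ≤ hom a c

/-- A `V`-functor is an object assignment which is (hom-)expanding. -/
def IsVFunctor {V : Type u} [CompleteLattice V] [CommMonoid V]
    (A : VCategory.{u, v} V) (B : VCategory.{u, w} V) (f : A.Obj → B.Obj) : Prop :=
  ∀ a a', A.hom a a' ≤ B.hom (f a) (f a')

/-- A module `R : A ⇸ B`. -/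
def IsModule {V : Type u} [CompleteLattice V] [CommMonoid V]
    (A : VCategory.{u, v} V) (B : VCategory.{u, w} V) (R : B.Obj → A.Obj → V) : Prop :=
  ∀ (a a' : A.Obj) (b b' : B.Obj), B.hom b' b * R b a * A.hom a a' ≤ R b' a'

/-- The internal hom of the quantale: `[x,y] = ⋁ {z | x ⊗ z ≤ y}`. -/
def ihom {V : Type u} [CompleteLattice V] [CommMonoid V] (x y : V) : V :=
  sSup {z | x * z ≤ y}

/-- A presheaf on `A`. -/
def IsPresheaf {V : Type u} [CompleteLattice V] [CommMonoid V]
    (A : VCategory.{u, v} V) (F : A.Obj → V) : Prop :=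
  ∀ a a', F a * A.hom a' a ≤ F a'

theorem isQuantale_of_mul_sSup {V : Type*} [CommSemigroup V] [CompleteLattice V]
    (mul_sSup : ∀ (x : V) (s : Set V), x * sSup s = ⨆ y ∈ s, x * y) : IsQuantale V where
  mul_sSup_distrib := mul_sSup
  sSup_mul_distrib s y := by simpa only [mul_comm] using mul_sSup y s

theorem iSup_mul_iSup {V ι κ : Type*} [Semigroup V] [CompleteLattice V] [IsQuantale V]
    (x : ι → V) (y : κ → V) : (⨆ i, x i) * ⨆ j, y j = ⨆ ij : ι × κ, x ij.1 * y ij.2 := by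
  rw [iSup_prod, Quantale.iSup_mul_distrib]
  exact iSup_congr fun _ => Quantale.mul_iSup_distrib

section

variable {V : Type*} [CompleteLattice V] [CommMonoid V]

/-- The tensor product `A ⊗ A'` of two `V`-categories; the corners of a tensor product of squares
are of this form. -/
def VCategory.tensor [IsQuantale V] (A A' : VCategory V) : VCategory V where
  Obj := A.Obj × A'.Obj
  hom x y := A.hom x.1 y.1 * A'.hom x.2 y.2
  one_le_hom x := one_le_mul (A.one_le_hom x.1) (A'.one_le_hom x.2)
  comp_le x y z :=
    calc
      A.hom y.1 z.1 * A'.hom y.2 z.2 * (A.hom x.1 y.1 * A'.hom x.2 y.2)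
        = A.hom y.1 z.1 * A.hom x.1 y.1 * (A'.hom y.2 z.2 * A'.hom x.2 y.2) :=
          mul_mul_mul_comm _ _ _ _
      _ ≤ A.hom x.1 z.1 * A'.hom x.2 z.2 :=
          mul_le_mul' (A.comp_le _ _ _) (A'.comp_le _ _ _)

/-- The formula that makes a lax square with legs `p₀`, `p₁` and cospan `f`, `g` exact, as a
condition on object maps alone. It sees the apex of the square only through its objects, so the
apex is encoded as a type `W`. -/
def IsExactSquare {W : Type*} (A B C : VCategory V) (p₀ : W → A.Obj) (p₁ : W → B.Obj)
    (f : A.Obj → C.Obj) (g : B.Obj → C.Obj) : Prop :=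
  ∀ a b, C.hom (f a) (g b) = ⨆ w, A.hom a (p₀ w) * B.hom (p₁ w) b

theorem tensor_of_exact_squares_exact_general [IsQuantale V] {W W' : Type*}
    {A B C A' B' C' : VCategory V}
    {p₀ : W → A.Obj} {p₁ : W → B.Obj} {f : A.Obj → C.Obj} {g : B.Obj → C.Obj}
    {p₀' : W' → A'.Obj} {p₁' : W' → B'.Obj} {f' : A'.Obj → C'.Obj} {g' : B'.Obj → C'.Obj}
    (square : IsExactSquare A B C p₀ p₁ f g) (square' : IsExactSquare A' B' C' p₀' p₁' f' g') :
    IsExactSquare (A.tensor A') (B.tensor B') (C.tensor C')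
      (Prod.map p₀ p₀') (Prod.map p₁ p₁') (Prod.map f f') (Prod.map g g') := by
  rintro ⟨a, a'⟩ ⟨b, b'⟩
  calc
    C.hom (f a) (g b) * C'.hom (f' a') (g' b')
      = (⨆ w, A.hom a (p₀ w) * B.hom (p₁ w) b) *
          ⨆ w', A'.hom a' (p₀' w') * B'.hom (p₁' w') b' := by rw [square, square']
    _ = ⨆ ww : W × W', A.hom a (p₀ ww.1) * B.hom (p₁ ww.1) b *
          (A'.hom a' (p₀' ww.2) * B'.hom (p₁' ww.2) b') := iSup_mul_iSup _ _
    _ = ⨆ ww : W × W', A.hom a (p₀ ww.1) * A'.hom a' (p₀' ww.2) *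
          (B.hom (p₁ ww.1) b * B'.hom (p₁' ww.2) b') :=
        iSup_congr fun _ => mul_mul_mul_comm _ _ _ _

end

/-- The tensor product of two exact lax squares is exact. -/
theorem tensor_of_exact_squares_exact {V : Type u} [CompleteLattice V] [CommMonoid V]
    (hV : ∀ (x : V) (s : Set V), x * sSup s = ⨆ y ∈ s, x * y)
    (P A B C : VCategory.{u, v} V)
    (p0 : P.Obj → A.Obj) (p1 : P.Obj → B.Obj) (f : A.Obj → C.Obj) (g : B.Obj → C.Obj)
    (hp0 : IsVFunctor P A p0) (hp1 : IsVFunctor P B p1)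
    (hf : IsVFunctor A C f) (hg : IsVFunctor B C g)
    (hlax : ∀ w : P.Obj, (1 : V) ≤ C.hom (f (p0 w)) (g (p1 w)))
    (hexact : ∀ (a : A.Obj) (b : B.Obj),
      C.hom (f a) (g b) = ⨆ w, A.hom a (p0 w) * B.hom (p1 w) b)
    (P' A' B' C' : VCategory.{u, v} V)
    (p0' : P'.Obj → A'.Obj) (p1' : P'.Obj → B'.Obj)
    (f' : A'.Obj → C'.Obj) (g' : B'.Obj → C'.Obj)
    (hp0' : IsVFunctor P' A' p0') (hp1' : IsVFunctor P' B' p1')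
    (hf' : IsVFunctor A' C' f') (hg' : IsVFunctor B' C' g')
    (hlax' : ∀ w : P'.Obj, (1 : V) ≤ C'.hom (f' (p0' w)) (g' (p1' w)))
    (hexact' : ∀ (a : A'.Obj) (b : B'.Obj),
      C'.hom (f' a) (g' b) = ⨆ w, A'.hom a (p0' w) * B'.hom (p1' w) b) :
    ∀ (a : A.Obj) (a' : A'.Obj) (b : B.Obj) (b' : B'.Obj),
      C.hom (f a) (g b) * C'.hom (f' a') (g' b') =
        ⨆ ww : P.Obj × P'.Obj,
          (A.hom a (p0 ww.1) * A'.hom a' (p0' ww.2)) *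
            (B.hom (p1 ww.1) b * B'.hom (p1' ww.2) b') := by
  have : IsQuantale V := isQuantale_of_mul_sSup hV
  have square : IsExactSquare A B C p0 p1 f g := hexact
  have square' : IsExactSquare A' B' C' p0' p1' f' g' := hexact'
  exact fun a a' b b' => tensor_of_exact_squares_exact_general square square' (a, a') (b, b')
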